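/- arXiv:1410.7572 — 2 statements merged into one kernel-verified Lean document; each statement's English description precedes it below -/
import Mathlib

section
/- Let d ≥ 1 and T > 0. Suppose h : [0,T] × ℝ^d → ℝ is 2π-periodic in each spatial coordinate, continuously differentiable in time and twice continuously differentiable in space, and is a classical solution of ∂_t h = ∇·((|∇h|² − 1)∇h) on [0,T] × ℝ^d. Then for every t ∈ [0,T], sup_{x ∈ ℝ^d} |∇h(t,x)| ≤ max{ sup_{x ∈ ℝ^d} |∇h(0,x)|, 1 }. -/
open Real MeasureTheory Set Filter
open scoped ENNReal

noncomputable section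

/-- `ℝ^d` with the Euclidean norm. -/
abbrev Ed (d : ℕ) := EuclideanSpace ℝ (Fin d)

/-- The fundamental domain `[-π,π]^d` of the torus `𝕋^d = ℝ^d/2πℤ^d`. -/
def Qd (d : ℕ) : Set (Ed d) := {x | ∀ i, |x i| ≤ Real.pi}

/-- The partial derivative `∂_{x_j} f` of `f : ℝ^d → ℝ`. -/
noncomputable def pd {d : ℕ} (f : Ed d → ℝ) (j : Fin d) (x : Ed d) : ℝ :=
  fderiv ℝ f x (EuclideanSpace.single j 1)

/-- `|∇f|²`, the squared Euclidean norm of the spatial gradient. -/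
noncomputable def gradSq {d : ℕ} (f : Ed d → ℝ) (x : Ed d) : ℝ := ∑ j, pd f j x ^ 2

/-- `|∇f|`, the Euclidean norm of the spatial gradient. -/
noncomputable def gradNorm {d : ℕ} (f : Ed d → ℝ) (x : Ed d) : ℝ := Real.sqrt (gradSq f x)

/-- The Laplacian `Δf = Σ_j ∂_{x_j}∂_{x_j} f`. -/
noncomputable def lapl {d : ℕ} (f : Ed d → ℝ) (x : Ed d) : ℝ := ∑ j, pd (pd f j) j x

/-- The slope-selection divergence term `∇·((|∇f|²−1)∇f) = Σ_j ∂_{x_j}((|∇f|²−1)∂_{x_j}f)`. -/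
noncomputable def slopeDiv {d : ℕ} (f : Ed d → ℝ) (x : Ed d) : ℝ :=
  ∑ j, pd (fun y => (gradSq f y - 1) * pd f j y) j x

/-- `f` is `2π`-periodic in each coordinate. -/
def PeriodicSpace {d : ℕ} (f : Ed d → ℝ) : Prop :=
  ∀ (j : Fin d) (x : Ed d), f (x + (2 * Real.pi) • EuclideanSpace.single j 1) = f x

/-!
Doubling of variables: the bound `|∇h(t,·)| ≤ L` says that the excess
`h(t,x) - h(t,y) - L|x - y|` is nonpositive. If the excess attains a positive maximum over space
at `(x, y)`, then `x ≠ y`, and moving both points together gives `∇h(x) = ∇h(y)` and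
`D²h(x) ≤ D²h(y)`, whereas moving `x` along the line through `y` gives `|∇h(x)| ≥ L`. When `L ≥ 1`
the operator `∇·((|∇h|²-1)∇h) = (|∇h|²-1)Δh + 2 D²h(∇h,∇h)` is therefore at most as large at `x`
as at `y`, so a positive maximum of the excess cannot grow. Only two space derivatives are used, so
the equation is never differentiated.
-/

open scoped Topology NNReal Gradient Pointwise

section TimeMaximum

variable {a b : ℝ}

lemma hasDerivWithinAt_nonneg_of_isMaxOn_Icc {φ : ℝ → ℝ} {φ' t : ℝ} (hat : a < t) (htb : t ≤ b)
    (hφ : HasDerivWithinAt φ φ' (Icc a b) t) (hmax : IsMaxOn φ (Icc a b) t) : 0 ≤ φ' := by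
  have hcone : a - t ∈ posTangentConeAt (Icc a b) t :=
    sub_mem_posTangentConeAt_of_segment_subset
      ((convex_Icc a b).segment_subset ⟨hat.le, htb⟩ ⟨le_rfl, hat.le.trans htb⟩)
  have hle : (a - t) * φ' ≤ 0 := by
    simpa using hmax.localize.hasFDerivWithinAt_nonpos hφ.hasFDerivWithinAt hcone
  exact nonneg_of_mul_nonpos_right hle (sub_neg.2 hat)

variable {X : Type*} [TopologicalSpace X] {K : Set X} {w w' : ℝ → X → ℝ}

lemma nonpos_of_deriv_neg_at_pos_max (hK : IsCompact K)
    (hcont : ContinuousOn (fun p : ℝ × X => w p.1 p.2) (Icc a b ×ˢ K))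
    (hderiv : ∀ t ∈ Icc a b, ∀ x ∈ K, HasDerivWithinAt (fun s => w s x) (w' t x) (Icc a b) t)
    (hinit : ∀ x ∈ K, w a x ≤ 0)
    (hneg : ∀ t ∈ Icc a b, ∀ x ∈ K, 0 < w t x → IsMaxOn (w t) K x → w' t x < 0) :
    ∀ t ∈ Icc a b, ∀ x ∈ K, w t x ≤ 0 := by
  intro t ht x hx
  obtain ⟨⟨t₀, x₀⟩, ⟨ht₀, hx₀⟩, hmax⟩ :=
    (isCompact_Icc.prod hK).exists_isMaxOn ⟨(t, x), ht, hx⟩ hcont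
  have hglobal : ∀ s ∈ Icc a b, ∀ y ∈ K, w s y ≤ w t₀ x₀ := fun s hs y hy =>
    hmax (show (s, y) ∈ Icc a b ×ˢ K from ⟨hs, hy⟩)
  refine (hglobal t ht x hx).trans (not_lt.1 fun hpos => ?_)
  have hat₀ : a < t₀ := ht₀.1.lt_of_ne (by rintro rfl; exact (hinit x₀ hx₀).not_gt hpos)
  have hnonneg : 0 ≤ w' t₀ x₀ := hasDerivWithinAt_nonneg_of_isMaxOn_Icc hat₀ ht₀.2
    (hderiv t₀ ht₀ x₀ hx₀) fun s hs => hglobal s hs x₀ hx₀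
  exact hnonneg.not_gt (hneg t₀ ht₀ x₀ hx₀ hpos fun y hy => hglobal t₀ ht₀ y hy)

lemma nonpos_of_deriv_nonpos_at_pos_max (hK : IsCompact K)
    (hcont : ContinuousOn (fun p : ℝ × X => w p.1 p.2) (Icc a b ×ˢ K))
    (hderiv : ∀ t ∈ Icc a b, ∀ x ∈ K, HasDerivWithinAt (fun s => w s x) (w' t x) (Icc a b) t)
    (hinit : ∀ x ∈ K, w a x ≤ 0)
    (hnonpos : ∀ t ∈ Icc a b, ∀ x ∈ K, 0 < w t x → IsMaxOn (w t) K x → w' t x ≤ 0) :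
    ∀ t ∈ Icc a b, ∀ x ∈ K, w t x ≤ 0 := by
  intro t ht x hx
  have hpenalized : ∀ ε > 0, w t x - ε * (t - a) ≤ 0 := by
    intro ε hε
    refine nonpos_of_deriv_neg_at_pos_max (w := fun s y => w s y - ε * (s - a))
      (w' := fun s y => w' s y - ε) hK (hcont.sub (by fun_prop)) ?_ ?_ ?_ t ht x hx
    · intro s hs y hy
      simpa using (hderiv s hs y hy).fun_sub
        (((hasDerivWithinAt_id s (Icc a b)).sub_const a).const_mul ε)
    · simpa using hinit
    · intro s hs y hy hpos hmax
      have hw : 0 < w s y := by linarith [mul_nonneg hε.le (sub_nonneg.2 hs.1)]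
      have hwmax : IsMaxOn (w s) K y := fun z hz =>
        (sub_le_sub_iff_right (ε * (s - a))).1 (hmax hz)
      linarith [hnonpos s hs y hy hw hwmax]
  have hlim : Tendsto (fun ε : ℝ => w t x - ε * (t - a)) (𝓝[>] 0) (𝓝 (w t x)) := by
    have hc : Continuous fun ε : ℝ => w t x - ε * (t - a) := by fun_prop
    simpa using (hc.tendsto 0).mono_left nhdsWithin_le_nhds
  exact le_of_tendsto hlim (eventually_mem_nhdsWithin.mono hpenalized)

end TimeMaximum

section SecondDerivativeTest

lemma deriv_deriv_nonpos_of_isLocalMax {φ : ℝ → ℝ} {s : ℝ} (hφ : ContinuousAt φ s)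
    (hmax : IsLocalMax φ s) : deriv (deriv φ) s ≤ 0 := by
  by_contra! hpos
  have hmin : IsLocalMin φ s := isLocalMin_of_deriv_deriv_pos hpos hmax.deriv_eq_zero hφ
  have hconst : φ =ᶠ[𝓝 s] fun _ => φ s := by
    filter_upwards [hmax, hmin] with r hle hge using le_antisymm hle hge
  have hzero : deriv (deriv φ) s = 0 := by simpa using hconst.deriv.deriv_eq
  exact hpos.ne' hzero

variable {E : Type*} [NormedAddCommGroup E] [NormedSpace ℝ E] {f : E → ℝ} {x : E}

lemma differentiable_fderiv_of_contDiff_two (hf : ContDiff ℝ 2 f) :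
    Differentiable ℝ (fderiv ℝ f) :=
  (hf.fderiv_right (m := 1) le_rfl).differentiable one_ne_zero

lemma fderiv_fderiv_nonpos_of_isLocalMax (hf : ContDiff ℝ 2 f) (hmax : IsLocalMax f x) (v : E) :
    fderiv ℝ (fderiv ℝ f) x v v ≤ 0 := by
  have hline (s : ℝ) : HasDerivAt (fun s : ℝ => x + s • v) v s := by
    simpa using ((hasDerivAt_id s).smul_const v).const_add x
  have hderiv : deriv (fun s : ℝ => f (x + s • v)) = fun s => fderiv ℝ f (x + s • v) v := by
    funext s
    exact ((hf.differentiable two_ne_zero _).hasFDerivAt.comp_hasDerivAt s (hline s)).deriv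
  have hd2f := differentiable_fderiv_of_contDiff_two hf
  have hderiv2 : deriv (fun s : ℝ => fderiv ℝ f (x + s • v) v) 0
      = fderiv ℝ (fderiv ℝ f) (x + (0 : ℝ) • v) v v :=
    (((ContinuousLinearMap.apply ℝ ℝ v).hasFDerivAt.comp _
      (hd2f _).hasFDerivAt).comp_hasDerivAt (0 : ℝ) (hline 0)).deriv
  have hmax_line : IsLocalMax (fun s : ℝ => f (x + s • v)) 0 :=
    IsLocalMax.comp_continuous (g := fun s : ℝ => x + s • v) (by simpa using hmax)
      (hline 0).continuousAt
  have hcont : Continuous fun s : ℝ => f (x + s • v) := hf.continuous.comp (by fun_prop)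
  have hle := deriv_deriv_nonpos_of_isLocalMax hcont.continuousAt hmax_line
  rwa [hderiv, hderiv2, zero_smul, add_zero] at hle

end SecondDerivativeTest

section LipschitzExcess

/-- The amount by which `f p.1 - f p.2` exceeds `L * dist p.1 p.2`: the function of the doubled
variable `p` that is nonpositive everywhere exactly when `f` is `L`-Lipschitz. -/
def lipExcess {E : Type*} [PseudoMetricSpace E] (L : ℝ) (f : E → ℝ) (p : E × E) : ℝ :=
  f p.1 - f p.2 - L * dist p.1 p.2

lemma lipschitzWith_iff_lipExcess_nonpos {E : Type*} [PseudoMetricSpace E] {L : ℝ≥0}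
    {f : E → ℝ} : LipschitzWith L f ↔ ∀ p, lipExcess L f p ≤ 0 := by
  simp only [LipschitzWith.iff_le_add_mul, lipExcess, Prod.forall, sub_sub, sub_nonpos]

variable {E : Type*} [NormedAddCommGroup E] {L : ℝ} {f : E → ℝ} {x y : E}

lemma isLocalMax_translate_sub_of_lipExcess (hmax : IsLocalMax (lipExcess L f) (x, y)) :
    IsLocalMax (fun z => f (x + z) - f (y + z)) 0 := by
  have hshift : IsLocalMax (fun z => lipExcess L f (x + z, y + z)) 0 :=
    IsLocalMax.comp_continuous (f := lipExcess L f) (g := fun z : E => (x + z, y + z)) (b := 0)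
      (by simpa using hmax) (by fun_prop)
  simpa [IsLocalMax, IsMaxFilter, lipExcess] using hshift

variable [NormedSpace ℝ E]

lemma fderiv_eq_of_isLocalMax_lipExcess (hf : Differentiable ℝ f)
    (hmax : IsLocalMax (lipExcess L f) (x, y)) : fderiv ℝ f x = fderiv ℝ f y := by
  have hzero := (isLocalMax_translate_sub_of_lipExcess hmax).fderiv_eq_zero
  rw [fderiv_fun_sub (by fun_prop) (by fun_prop), fderiv_comp_add_left, fderiv_comp_add_left,
    add_zero, add_zero] at hzero
  exact sub_eq_zero.1 hzero

lemma fderiv_fderiv_le_of_isLocalMax_lipExcess (hf : ContDiff ℝ 2 f)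
    (hmax : IsLocalMax (lipExcess L f) (x, y)) (v : E) :
    fderiv ℝ (fderiv ℝ f) x v v ≤ fderiv ℝ (fderiv ℝ f) y v v := by
  have hdf : Differentiable ℝ f := hf.differentiable two_ne_zero
  have hd2f (z : E) : DifferentiableAt ℝ (fun w => fderiv ℝ f (z + w)) 0 :=
    (differentiableAt_comp_add_left z).2 (differentiable_fderiv_of_contDiff_two hf _)
  have hfderiv : fderiv ℝ (fun z => f (x + z) - f (y + z))
      = fun z => fderiv ℝ f (x + z) - fderiv ℝ f (y + z) := by
    funext z
    rw [fderiv_fun_sub (by fun_prop) (by fun_prop), fderiv_comp_add_left, fderiv_comp_add_left]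
  have hle := fderiv_fderiv_nonpos_of_isLocalMax (by fun_prop)
    (isLocalMax_translate_sub_of_lipExcess hmax) v
  rw [hfderiv, fderiv_fun_sub (hd2f x) (hd2f y), fderiv_comp_add_left, fderiv_comp_add_left,
    add_zero, add_zero] at hle
  exact sub_nonpos.1 hle

lemma fderiv_apply_sub_eq_of_isLocalMax_lipExcess (hf : DifferentiableAt ℝ f x)
    (hmax : IsLocalMax (lipExcess L f) (x, y)) : fderiv ℝ f x (x - y) = L * dist x y := by
  let φ : ℝ → ℝ := fun s => f (x + s • (x - y)) - f y - L * ((1 + s) * dist x y)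
  have hφ : HasDerivAt φ (fderiv ℝ f x (x - y) - L * dist x y) 0 := by
    have hline : HasDerivAt (fun s : ℝ => x + s • (x - y)) (x - y) 0 := by
      simpa using ((hasDerivAt_id (0 : ℝ)).smul_const (x - y)).const_add x
    have hfx : HasFDerivAt f (fderiv ℝ f x) (x + (0 : ℝ) • (x - y)) := by
      simpa using hf.hasFDerivAt
    simpa using ((hfx.comp_hasDerivAt (0 : ℝ) hline).sub_const (f y)).fun_sub
      ((((hasDerivAt_id (0 : ℝ)).const_add 1).mul_const (dist x y)).const_mul L)
  have hmax_line : IsLocalMax (fun s : ℝ => lipExcess L f (x + s • (x - y), y)) 0 :=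
    IsLocalMax.comp_continuous (f := lipExcess L f) (g := fun s : ℝ => (x + s • (x - y), y))
      (b := 0) (by simpa using hmax) (by fun_prop)
  have heq : (fun s : ℝ => lipExcess L f (x + s • (x - y), y)) =ᶠ[𝓝 0] φ := by
    filter_upwards [Ioi_mem_nhds (neg_one_lt_zero (R := ℝ))] with s hs
    have hs' : 0 ≤ 1 + s := by linarith [mem_Ioi.1 hs]
    have hsub : x + s • (x - y) - y = (1 + s) • (x - y) := by module
    simp only [lipExcess, φ, dist_eq_norm, hsub, norm_smul, Real.norm_of_nonneg hs']
  exact sub_eq_zero.1 ((hmax_line.congr heq).hasDerivAt_eq_zero hφ)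

lemma le_norm_fderiv_of_isLocalMax_lipExcess (hf : DifferentiableAt ℝ f x) (hxy : x ≠ y)
    (hmax : IsLocalMax (lipExcess L f) (x, y)) : L ≤ ‖fderiv ℝ f x‖ := by
  refine le_of_mul_le_mul_right ?_ (dist_pos.2 hxy)
  calc L * dist x y = fderiv ℝ f x (x - y) :=
        (fderiv_apply_sub_eq_of_isLocalMax_lipExcess hf hmax).symm
    _ ≤ ‖fderiv ℝ f x (x - y)‖ := Real.le_norm_self _
    _ ≤ ‖fderiv ℝ f x‖ * dist x y := by
        rw [dist_eq_norm]; exact (fderiv ℝ f x).le_opNorm _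

end LipschitzExcess

section PeriodicFunctions

variable {G : Type*} [AddGroup G] {Γ : AddSubgroup G} {Q : Set G}

lemma exists_mem_eq_of_periodic {F : Type*} (hcover : ∀ x, ∃ v ∈ Γ, x + v ∈ Q) {g : G → F}
    (hg : ∀ v ∈ Γ, Function.Periodic g v) (x : G) : ∃ y ∈ Q, g y = g x := by
  obtain ⟨v, hv, hxv⟩ := hcover x
  exact ⟨x + v, hxv, hg v hv x⟩

lemma exists_forall_norm_le_of_periodic [TopologicalSpace G] {X F : Type*} [TopologicalSpace X]
    [SeminormedAddCommGroup F] {S : Set X} (hS : IsCompact S) (hQ : IsCompact Q)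
    (hcover : ∀ x, ∃ v ∈ Γ, x + v ∈ Q) {g : X → G → F}
    (hper : ∀ s ∈ S, ∀ v ∈ Γ, Function.Periodic (g s) v)
    (hcont : ContinuousOn (fun p : X × G => g p.1 p.2) (S ×ˢ univ)) :
    ∃ M, ∀ s ∈ S, ∀ x, ‖g s x‖ ≤ M := by
  obtain ⟨M, hM⟩ := (hS.prod hQ).exists_bound_of_continuousOn
    (hcont.mono (prod_mono_right (subset_univ Q)))
  refine ⟨M, fun s hs x => ?_⟩
  obtain ⟨y, hy, hyx⟩ := exists_mem_eq_of_periodic hcover (hper s hs) x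
  exact hyx ▸ hM (s, y) ⟨hs, hy⟩

end PeriodicFunctions

section PeriodicEvolution

variable {E : Type*} [NormedAddCommGroup E] {Γ : AddSubgroup E} {Q : Set E}

lemma exists_mem_lipExcess_eq_of_periodic {L M : ℝ} {f : E → ℝ} (hL : 0 < L)
    (hcover : ∀ x, ∃ v ∈ Γ, x + v ∈ Q) (hf : ∀ v ∈ Γ, Function.Periodic f v)
    (hM : ∀ x, ‖f x‖ ≤ M) (p : E × E) (hp : 0 < lipExcess L f p) :
    ∃ q ∈ (Q + Metric.closedBall 0 (2 * M / L)) ×ˢ Q, lipExcess L f q = lipExcess L f p := by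
  obtain ⟨x, y⟩ := p
  obtain ⟨v, hv, hyv⟩ := hcover y
  have hnear : x - y ∈ Metric.closedBall 0 (2 * M / L) := by
    rw [mem_closedBall_zero_iff, le_div_iff₀ hL, ← dist_eq_norm]
    simp only [lipExcess] at hp
    linarith [abs_le.1 (hM x), abs_le.1 (hM y)]
  have hsum : y + v + (x - y) = x + v := by abel
  exact ⟨(x + v, y + v), ⟨hsum ▸ add_mem_add hyv hnear, hyv⟩,
    by simp [lipExcess, hf v hv x, hf v hv y]⟩

lemma continuousOn_lipExcess {X : Type*} [TopologicalSpace X] {S : Set X} {h : X → E → ℝ}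
    (L : ℝ) (hcont : ContinuousOn (fun p : X × E => h p.1 p.2) (S ×ˢ univ)) :
    ContinuousOn (fun p : X × E × E => lipExcess L (h p.1) p.2) (S ×ˢ univ) := by
  have hfst : ContinuousOn (fun p : X × E × E => h p.1 p.2.1) (S ×ˢ univ) :=
    hcont.comp (f := fun p : X × E × E => (p.1, p.2.1)) (by fun_prop) fun p hp => ⟨hp.1, trivial⟩
  have hsnd : ContinuousOn (fun p : X × E × E => h p.1 p.2.2) (S ×ˢ univ) :=
    hcont.comp (f := fun p : X × E × E => (p.1, p.2.2)) (by fun_prop) fun p hp => ⟨hp.1, trivial⟩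
  exact (hfst.sub hsnd).sub (by fun_prop)

lemma isMaxOn_univ_of_isMaxOn_of_pos {α : Type*} {g : α → ℝ} {K : Set α} {p : α}
    (hK : ∀ p, 0 < g p → ∃ q ∈ K, g q = g p) (hpos : 0 < g p) (hmax : IsMaxOn g K p) :
    IsMaxOn g univ p := by
  intro r _
  rcases le_or_gt (g r) 0 with hr | hr
  · exact hr.trans hpos.le
  · obtain ⟨q, hq, hqr⟩ := hK r hr
    exact hqr.ge.trans (hmax hq)

lemma lipschitzWith_of_deriv_le_at_lipExcess_max [ProperSpace E] (hQ : IsCompact Q)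
    (hcover : ∀ x, ∃ v ∈ Γ, x + v ∈ Q) {a b : ℝ} {h h' : ℝ → E → ℝ} {L : ℝ≥0} (hL : 0 < L)
    (hper : ∀ t ∈ Icc a b, ∀ v ∈ Γ, Function.Periodic (h t) v)
    (hcont : ContinuousOn (fun p : ℝ × E => h p.1 p.2) (Icc a b ×ˢ univ))
    (hderiv : ∀ x, ∀ t ∈ Icc a b, HasDerivWithinAt (fun s => h s x) (h' t x) (Icc a b) t)
    (hmax : ∀ t ∈ Icc a b, ∀ x y, x ≠ y → IsMaxOn (lipExcess L (h t)) univ (x, y) →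
      h' t x ≤ h' t y)
    (hinit : LipschitzWith L (h a)) : ∀ t ∈ Icc a b, LipschitzWith L (h t) := by
  obtain ⟨M, hM⟩ := exists_forall_norm_le_of_periodic isCompact_Icc hQ hcover hper hcont
  let K : Set (E × E) := (Q + Metric.closedBall 0 (2 * M / L)) ×ˢ Q
  have hK : IsCompact K := (hQ.add (isCompact_closedBall _ _)).prod hQ
  have hreduce : ∀ t ∈ Icc a b, ∀ p, 0 < lipExcess L (h t) p →
      ∃ q ∈ K, lipExcess L (h t) q = lipExcess L (h t) p := fun t ht =>
    exists_mem_lipExcess_eq_of_periodic hL hcover (hper t ht) (hM t ht)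
  have hexcess : ∀ t ∈ Icc a b, ∀ p ∈ K, lipExcess L (h t) p ≤ 0 := by
    refine nonpos_of_deriv_nonpos_at_pos_max (w' := fun t p => h' t p.1 - h' t p.2) hK
      ((continuousOn_lipExcess L hcont).mono (prod_mono_right (subset_univ K)))
      (fun t ht p _ => ((hderiv p.1 t ht).sub (hderiv p.2 t ht)).sub_const _)
      (fun p _ => lipschitzWith_iff_lipExcess_nonpos.1 hinit p) ?_
    rintro t ht ⟨x, y⟩ - hpos hmaxK
    have hxy : x ≠ y := by rintro rfl; simp [lipExcess] at hpos
    exact sub_nonpos.2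
      (hmax t ht x y hxy (isMaxOn_univ_of_isMaxOn_of_pos (hreduce t ht) hpos hmaxK))
  intro t ht
  refine lipschitzWith_iff_lipExcess_nonpos.2 fun p => not_lt.1 fun hp => ?_
  obtain ⟨q, hq, hqp⟩ := hreduce t ht p hp
  exact (hexcess t ht q hq).not_gt (hqp ▸ hp)

end PeriodicEvolution

section SlopeSelection

variable {d : ℕ} {f : Ed d → ℝ} {x y : Ed d}

lemma gradient_apply_eq_pd (f : Ed d → ℝ) (x : Ed d) (j : Fin d) : (∇ f x) j = pd f j x := by
  have hinner : inner ℝ (∇ f x) (EuclideanSpace.single j (1 : ℝ)) = pd f j x := by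
    rw [gradient, InnerProductSpace.toDual_symm_apply, pd]
  rwa [EuclideanSpace.inner_single_right, one_mul] at hinner

lemma gradient_eq_sum_pd (f : Ed d → ℝ) (x : Ed d) :
    ∇ f x = ∑ j, pd f j x • EuclideanSpace.single j (1 : ℝ) := by
  simpa [gradient_apply_eq_pd] using
    ((EuclideanSpace.basisFun (Fin d) ℝ).sum_repr (∇ f x)).symm

lemma gradNorm_eq_norm_fderiv (f : Ed d → ℝ) (x : Ed d) : gradNorm f x = ‖fderiv ℝ f x‖ := by
  rw [← toDual_gradient, LinearIsometryEquiv.norm_map, EuclideanSpace.norm_eq]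
  simp [gradNorm, gradSq, gradient_apply_eq_pd]

lemma lipschitzWith_of_gradNorm_le {L : ℝ≥0} (hf : Differentiable ℝ f)
    (hL : ∀ x, gradNorm f x ≤ L) : LipschitzWith L f :=
  lipschitzWith_of_nnnorm_fderiv_le hf fun x => by
    exact_mod_cast (gradNorm_eq_norm_fderiv f x).ge.trans (hL x)

lemma hasFDerivAt_pd (hf : ContDiff ℝ 2 f) (j : Fin d) (x : Ed d) :
    HasFDerivAt (pd f j) ((fderiv ℝ (fderiv ℝ f) x).flip (EuclideanSpace.single j 1)) x := by
  have hd2f := differentiable_fderiv_of_contDiff_two hf x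
  exact (hd2f.hasFDerivAt.clm_apply (hasFDerivAt_const _ x)).congr_fderiv (by ext; simp)

lemma lapl_eq_sum_fderiv_fderiv (hf : ContDiff ℝ 2 f) (x : Ed d) :
    lapl f x = ∑ j, fderiv ℝ (fderiv ℝ f) x (EuclideanSpace.single j 1)
      (EuclideanSpace.single j 1) := by
  refine Finset.sum_congr rfl fun j _ => ?_
  rw [pd, (hasFDerivAt_pd hf j x).fderiv, ContinuousLinearMap.flip_apply]

lemma hasFDerivAt_gradSq (hf : ContDiff ℝ 2 f) (x : Ed d) :
    HasFDerivAt (gradSq f) ((2 : ℝ) • (fderiv ℝ (fderiv ℝ f) x).flip (∇ f x)) x := by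
  have hsum := HasFDerivAt.fun_sum (u := Finset.univ) fun j _ => (hasFDerivAt_pd hf j x).pow 2
  refine hsum.congr_fderiv ?_
  simp [gradient_eq_sum_pd, Finset.smul_sum, smul_smul]

lemma slopeDiv_eq_lapl_add_hessian (hf : ContDiff ℝ 2 f) (x : Ed d) :
    slopeDiv f x = (gradSq f x - 1) * lapl f x
      + 2 * fderiv ℝ (fderiv ℝ f) x (∇ f x) (∇ f x) := by
  have hterm (j : Fin d) : pd (fun y => (gradSq f y - 1) * pd f j y) j x
      = (gradSq f x - 1) * pd (pd f j) j x
        + 2 * (pd f j x * fderiv ℝ (fderiv ℝ f) x (EuclideanSpace.single j 1) (∇ f x)) := by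
    have hprod := ((hasFDerivAt_gradSq hf x).sub_const 1).fun_mul (hasFDerivAt_pd hf j x)
    rw [pd, hprod.fderiv, pd.eq_def (pd f j), (hasFDerivAt_pd hf j x).fderiv]
    simp only [add_apply, smul_apply, ContinuousLinearMap.flip_apply, smul_eq_mul]
    ring
  have hhessian : fderiv ℝ (fderiv ℝ f) x (∇ f x) (∇ f x)
      = ∑ j, pd f j x * fderiv ℝ (fderiv ℝ f) x (EuclideanSpace.single j 1) (∇ f x) := by
    conv_lhs => enter [1]; rw [gradient_eq_sum_pd]
    simp
  simp only [slopeDiv, hterm, Finset.sum_add_distrib, ← Finset.mul_sum, hhessian, lapl]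

lemma slopeDiv_le_of_isLocalMax_lipExcess {L : ℝ} (hf : ContDiff ℝ 2 f) (hL : 1 ≤ L)
    (hxy : x ≠ y) (hmax : IsLocalMax (lipExcess L f) (x, y)) : slopeDiv f x ≤ slopeDiv f y := by
  have hdf : Differentiable ℝ f := hf.differentiable two_ne_zero
  have hfderiv := fderiv_eq_of_isLocalMax_lipExcess hdf hmax
  have hhessian := fderiv_fderiv_le_of_isLocalMax_lipExcess hf hmax
  have hgradient : ∇ f x = ∇ f y := by rw [gradient, gradient, hfderiv]
  have hgradSq : gradSq f x = gradSq f y := by simp only [gradSq, pd, hfderiv]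
  have hslope : 1 ≤ gradSq f y := by
    rw [← hgradSq, ← Real.one_le_sqrt, ← gradNorm, gradNorm_eq_norm_fderiv]
    exact hL.trans (le_norm_fderiv_of_isLocalMax_lipExcess (hdf x) hxy hmax)
  have hlapl : lapl f x ≤ lapl f y := by
    rw [lapl_eq_sum_fderiv_fderiv hf, lapl_eq_sum_fderiv_fderiv hf]
    exact Finset.sum_le_sum fun j _ => hhessian _
  rw [slopeDiv_eq_lapl_add_hessian hf, slopeDiv_eq_lapl_add_hessian hf, hgradSq, hgradient]
  exact add_le_add (mul_le_mul_of_nonneg_left hlapl (sub_nonneg.2 hslope))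
    (mul_le_mul_of_nonneg_left (hhessian _) zero_le_two)

end SlopeSelection

section PeriodLattice

variable {d : ℕ} {f : Ed d → ℝ}

/-- The lattice `2πℤ^d` of periods of functions on the torus `𝕋^d`. -/
def periodLattice (d : ℕ) : AddSubgroup (Ed d) :=
  AddSubgroup.closure (range fun j => (2 * π) • EuclideanSpace.single j (1 : ℝ))

lemma periodic_of_mem_periodLattice (hf : PeriodicSpace f) :
    ∀ v ∈ periodLattice d, Function.Periodic f v := by
  intro v hv
  induction hv using AddSubgroup.closure_induction with
  | mem v hv => obtain ⟨j, rfl⟩ := hv; exact hf j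
  | zero => exact fun x => by rw [add_zero]
  | add v w _ _ hv hw => exact hv.add_period hw
  | neg v _ hv => exact hv.neg

lemma exists_mem_periodLattice_add_mem_Qd (x : Ed d) : ∃ v ∈ periodLattice d, x + v ∈ Qd d := by
  let n : Fin d → ℤ := fun j => round (x j / (2 * π))
  refine ⟨∑ j, -n j • ((2 * π) • EuclideanSpace.single j (1 : ℝ)), ?_, fun i => ?_⟩
  · exact sum_mem fun j _ => zsmul_mem (AddSubgroup.subset_closure (mem_range_self j)) _
  · have hcoord : (x + ∑ j, -n j • ((2 * π) • EuclideanSpace.single j (1 : ℝ))) i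
        = (x i / (2 * π) - n i) * (2 * π) := by
      rw [sub_mul, div_mul_cancel₀ _ Real.two_pi_pos.ne']
      simp [Pi.single_apply, sub_eq_add_neg, mul_comm]
    calc |(x + ∑ j, -n j • ((2 * π) • EuclideanSpace.single j (1 : ℝ))) i|
        = |x i / (2 * π) - n i| * (2 * π) := by
          rw [hcoord, abs_mul, abs_of_pos Real.two_pi_pos]
      _ ≤ 1 / 2 * (2 * π) := by gcongr; exact abs_sub_round _
      _ = π := by ring

lemma isCompact_Qd (d : ℕ) : IsCompact (Qd d) := by
  have hQ : Qd d = WithLp.ofLp ⁻¹' Set.pi univ fun _ : Fin d => Icc (-π) π := by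
    ext x
    simp [Qd, abs_le, Pi.le_def, forall_and]
  rw [hQ]
  exact (PiLp.homeomorph 2 fun _ : Fin d => ℝ).isCompact_preimage.2
    (isCompact_univ_pi fun _ => isCompact_Icc)

lemma bddAbove_range_gradNorm (hf : ContDiff ℝ 1 f) (hper : PeriodicSpace f) :
    BddAbove (range (gradNorm f)) := by
  have hperiodic : ∀ v ∈ periodLattice d, Function.Periodic (fderiv ℝ f) v := by
    intro v hv x
    rw [← fderiv_comp_add_right, (periodic_of_mem_periodLattice hper v hv).funext]
  obtain ⟨C, hC⟩ := (isCompact_Qd d).exists_bound_of_continuousOn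
    (hf.continuous_fderiv one_ne_zero).continuousOn
  refine ⟨C, forall_mem_range.2 fun x => ?_⟩
  obtain ⟨y, hy, hyx⟩ := exists_mem_eq_of_periodic exists_mem_periodLattice_add_mem_Qd hperiodic x
  rw [gradNorm_eq_norm_fderiv, ← hyx]
  exact hC y hy

end PeriodLattice

/-- Maximum principle for smooth solutions of
`∂_t h = ∇·((|∇h|²−1)∇h)` on the torus `𝕋^d`, Proposition 1.1:
if `h ∈ C_t^1 C_x^2([0,T] × 𝕋^d)` is a classical solution, then for every `t ∈ [0,T]`,
`‖∇h(t,·)‖_∞ ≤ max{‖∇h(0,·)‖_∞, 1}`. -/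
theorem stmt0 (d : ℕ) (hd : 1 ≤ d) (T : ℝ) (hT : 0 < T) (h : ℝ → Ed d → ℝ)
    (hper : ∀ t ∈ Icc 0 T, PeriodicSpace (h t))
    (hregx : ∀ t ∈ Icc 0 T, ContDiff ℝ 2 (h t))
    (hcont : ContinuousOn (fun p : ℝ × Ed d => h p.1 p.2) (Icc 0 T ×ˢ univ))
    (hpde : ∀ (x : Ed d), ∀ t ∈ Icc 0 T,
      HasDerivWithinAt (fun s => h s x) (slopeDiv (h t) x) (Icc 0 T) t) :
    ∀ t ∈ Icc 0 T, ∀ x : Ed d,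
      gradNorm (h t) x ≤ max (⨆ y : Ed d, gradNorm (h 0) y) 1 := by
  intro t ht x
  have h0 : (0 : ℝ) ∈ Icc 0 T := ⟨le_rfl, hT.le⟩
  obtain ⟨L, hL⟩ : ∃ L : ℝ≥0, (L : ℝ) = max (⨆ y, gradNorm (h 0) y) 1 :=
    ⟨⟨_, zero_le_one.trans (le_max_right _ _)⟩, rfl⟩
  have hL1 : (1 : ℝ) ≤ L := hL ▸ le_max_right _ _
  have hinit : LipschitzWith L (h 0) := by
    refine lipschitzWith_of_gradNorm_le ((hregx 0 h0).differentiable two_ne_zero) fun y => ?_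
    have hbdd := bddAbove_range_gradNorm ((hregx 0 h0).of_le one_le_two) (hper 0 h0)
    exact hL ▸ (le_ciSup hbdd y).trans (le_max_left _ _)
  have hlip : LipschitzWith L (h t) :=
    lipschitzWith_of_deriv_le_at_lipExcess_max (isCompact_Qd d)
      exists_mem_periodLattice_add_mem_Qd (zero_lt_one.trans_le hL1)
      (fun s hs => periodic_of_mem_periodLattice (hper s hs)) hcont hpde
      (fun s hs y z hyz hmax => slopeDiv_le_of_isLocalMax_lipExcess (hregx s hs) hL1 hyz
        (hmax.isLocalMax univ_mem)) hinit t ht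
  rw [gradNorm_eq_norm_fderiv, ← hL]
  exact norm_fderiv_le_of_lipschitz ℝ hlip
end
end

section
/- Let T > 0. Suppose h : [0,T] × ℝ → ℝ is 2π-periodic in x, continuously differentiable in time and twice continuously differentiable in space, and is a classical solution of ∂_t h = ∂_x((∂_x h)³ − ∂_x h) on [0,T] × ℝ. Then for every t ∈ [0,T], sup_{x ∈ ℝ} |∂_x h(t,x)| ≤ max{ sup_{x ∈ ℝ} |∂_x h(0,x)|, 1/√3 }. -/
open Real MeasureTheory Set Filter

noncomputable section

/-!
Fix a slope `M ≥ 0` with `M ≥ sup |∂ₓh(0,·)|` at which the equation is parabolic. The bound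
`∂ₓh ≤ M` says that `x ↦ h(t,x) - M x` is antitone, so it suffices that the two-point function
`(t, x, y) ↦ (h(t,y) - M y) - (h(t,x) - M x) - ε t` is nonpositive for `x ≤ y` and every `ε > 0`.
By periodicity and `M ≥ 0` it attains its maximum. If the maximum were positive, it would be
attained at some `t > 0` and `x < y`, where both slopes equal `M` and `∂ₓₓh(t,y) ≤ 0 ≤ ∂ₓₓh(t,x)`.
Parabolicity then makes the time derivative of the two-point function at most `-ε`,
which is impossible at a maximum. Comparing two points avoids differentiating the equation in `x`,
for which `h` has too little regularity. The lower bound follows by applying this to `-h`.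
-/

section Calculus

variable {f g : ℝ → ℝ} {x M : ℝ}

theorem deriv_deriv_nonpos_of_isLocalMax_s1 (hf : ContinuousAt f x) (hmax : IsLocalMax f x) :
    deriv (deriv f) x ≤ 0 := by
  by_contra! hpos
  have hmin : IsLocalMin f x := isLocalMin_of_deriv_deriv_pos hpos hmax.deriv_eq_zero hf
  have hconst : f =ᶠ[nhds x] fun _ => f x := by
    filter_upwards [hmax, hmin] with z hle hge using le_antisymm hle hge
  exact hpos.ne' (by simpa using hconst.deriv.deriv_eq)

theorem deriv_sub_const_mul_id (hf : Differentiable ℝ f) (M : ℝ) :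
    deriv (fun z => f z - M * z) = fun z => deriv f z - M :=
  funext fun z => by
    simpa using ((hf z).hasDerivAt.fun_sub ((hasDerivAt_id z).const_mul M)).deriv

theorem deriv_eq_and_deriv_deriv_nonpos_of_isLocalMax_sub_mul (hf : Differentiable ℝ f)
    (hmax : IsLocalMax (fun z => f z - M * z) x) : deriv f x = M ∧ deriv (deriv f) x ≤ 0 := by
  have hslope := hmax.deriv_eq_zero
  have hcurv := deriv_deriv_nonpos_of_isLocalMax_s1
    (hf.continuous.fun_sub (continuous_const_mul M)).continuousAt hmax
  rw [deriv_sub_const_mul_id hf] at hslope hcurv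
  exact ⟨sub_eq_zero.1 hslope, by simpa using hcurv⟩

theorem deriv_eq_and_deriv_deriv_nonneg_of_isLocalMin_sub_mul (hf : Differentiable ℝ f)
    (hmin : IsLocalMin (fun z => f z - M * z) x) : deriv f x = M ∧ 0 ≤ deriv (deriv f) x := by
  have hmax : IsLocalMax (fun z => (-f) z - -M * z) x := by
    convert! hmin.neg using 2
    simp only [Pi.neg_apply]
    ring
  simpa [deriv.neg'] using deriv_eq_and_deriv_deriv_nonpos_of_isLocalMax_sub_mul hf.neg hmax

theorem antitone_sub_mul_iff_deriv_le (hf : Differentiable ℝ f) :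
    Antitone (fun x => f x - M * x) ↔ ∀ x, deriv f x ≤ M := by
  have hderiv : ∀ x, deriv (fun z => f z - M * z) x = deriv f x - M :=
    congrFun (deriv_sub_const_mul_id hf M)
  refine ⟨fun hanti x => ?_, fun hle => antitone_of_deriv_nonpos (by fun_prop) fun x => ?_⟩
  · have hnonpos := hanti.deriv_nonpos (x := x)
    rwa [hderiv, sub_nonpos] at hnonpos
  · rw [hderiv, sub_nonpos]
    exact hle x

theorem deriv_nonneg_of_isMaxOn_Icc {a b t g' : ℝ} (hat : a < t) (htb : t ≤ b)
    (hg : HasDerivWithinAt g g' (Icc a b) t) (hmax : IsMaxOn g (Icc a b) t) : 0 ≤ g' := by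
  have hcone : a - t ∈ posTangentConeAt (Icc a b) t :=
    sub_mem_posTangentConeAt_of_segment_subset
      ((convex_Icc a b).segment_subset ⟨hat.le, htb⟩ ⟨le_rfl, hat.le.trans htb⟩)
  have hle : (a - t) * g' ≤ 0 := by
    simpa using hmax.localize.hasFDerivWithinAt_nonpos hg.hasFDerivWithinAt hcone
  exact nonneg_of_mul_nonpos_right hle (sub_neg.2 hat)

theorem deriv_cube_sub_self (hg : DifferentiableAt ℝ g x) :
    deriv (fun y => g y ^ 3 - g y) x = (3 * g x ^ 2 - 1) * deriv g x := by
  rw [((hg.hasDerivAt.fun_pow 3).fun_sub hg.hasDerivAt).deriv]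
  push_cast
  ring

end Calculus

section Periodic

theorem exists_mem_Icc_pair_of_periodic {α : Type*} {f : ℝ → α} {c x y : ℝ}
    (hf : Function.Periodic f c) (hc : 0 < c) (hxy : x ≤ y) :
    ∃ x' ∈ Icc 0 c, ∃ d ∈ Icc 0 c, d ≤ y - x ∧ f x' = f x ∧ f (x' + d) = f y := by
  obtain ⟨m, hm, -⟩ := existsUnique_sub_zsmul_mem_Ico hc x 0
  have hfloor_le : ⌊(y - x) / c⌋₊ * c ≤ y - x :=
    (le_div_iff₀ hc).1 (Nat.floor_le (div_nonneg (sub_nonneg.2 hxy) hc.le))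
  have hlt_floor : y - x < (⌊(y - x) / c⌋₊ + 1) * c :=
    (div_lt_iff₀ hc).1 (Nat.lt_floor_add_one _)
  refine ⟨x - m • c, Ico_subset_Icc_self (by simpa using hm), y - x - ⌊(y - x) / c⌋₊ • c,
    ⟨?_, ?_⟩, sub_le_self _ (nsmul_nonneg hc.le _), hf.sub_zsmul_eq m, ?_⟩
  · simpa using hfloor_le
  · rw [nsmul_eq_mul]
    linarith
  · rw [show x - m • c + (y - x - ⌊(y - x) / c⌋₊ • c) = y - m • c - ⌊(y - x) / c⌋₊ • c by abel,
      hf.sub_nsmul_eq, hf.sub_zsmul_eq]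

theorem periodic_deriv {𝕜 F : Type*} [NontriviallyNormedField 𝕜] [NormedAddCommGroup F]
    [NormedSpace 𝕜 F] {f : 𝕜 → F} {c : 𝕜} (hf : Function.Periodic f c) :
    Function.Periodic (deriv f) c := fun x => by
  rw [← deriv_comp_add_const, funext hf]

end Periodic

/-- `h` is a classical solution of `∂ₜh = G(∂ₓh, ∂ₓₓh)` on `[0, T] × ℝ` that is `c`-periodic in
space. The space derivatives up to order two need only exist, and the time derivative is one-sided
at `t = 0` and `t = T`. -/
structure IsPeriodicSolution (G : ℝ → ℝ → ℝ) (c T : ℝ) (h : ℝ → ℝ → ℝ) : Prop where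
  periodic : ∀ t ∈ Icc 0 T, Function.Periodic (h t) c
  differentiable : ∀ t ∈ Icc 0 T, Differentiable ℝ (h t)
  differentiable_deriv : ∀ t ∈ Icc 0 T, Differentiable ℝ (deriv (h t))
  continuousOn : ContinuousOn (fun p : ℝ × ℝ => h p.1 p.2) (Icc 0 T ×ˢ univ)
  hasDerivWithinAt : ∀ x, ∀ t ∈ Icc 0 T,
    HasDerivWithinAt (fun s => h s x) (G (deriv (h t) x) (deriv (deriv (h t)) x)) (Icc 0 T) t

/-- The excess of the increment of `h t` from `x` to `y` over slope `M`, with the penalty `ε * t`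
that makes the maximum principle strict. -/
def penalizedIncrement (h : ℝ → ℝ → ℝ) (M ε t x y : ℝ) : ℝ :=
  (h t y - M * y) - (h t x - M * x) - ε * t

namespace IsPeriodicSolution

variable {G : ℝ → ℝ → ℝ} {c T M ε : ℝ} {h : ℝ → ℝ → ℝ}

theorem neg (hh : IsPeriodicSolution G c T h) :
    IsPeriodicSolution (fun p q => -G (-p) (-q)) c T (-h) where
  periodic t ht x := by simp [hh.periodic t ht x]
  differentiable t ht := (hh.differentiable t ht).neg
  differentiable_deriv t ht := by
    simpa [deriv.neg'] using (hh.differentiable_deriv t ht).neg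
  continuousOn := hh.continuousOn.neg
  hasDerivWithinAt x t ht := by
    simpa [deriv.neg'] using (hh.hasDerivWithinAt x t ht).fun_neg

theorem continuousOn_penalizedIncrement (hh : IsPeriodicSolution G c T h) :
    ContinuousOn (fun p : ℝ × ℝ × ℝ => penalizedIncrement h M ε p.1 p.2.1 (p.2.1 + p.2.2))
      (Icc 0 T ×ˢ univ) := by
  have hleft : ContinuousOn (fun p : ℝ × ℝ × ℝ => h p.1 p.2.1) (Icc 0 T ×ˢ univ) :=
    hh.continuousOn.comp (f := fun p : ℝ × ℝ × ℝ => (p.1, p.2.1))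
      (by fun_prop) fun p hp => ⟨hp.1, mem_univ _⟩
  have hright : ContinuousOn (fun p : ℝ × ℝ × ℝ => h p.1 (p.2.1 + p.2.2)) (Icc 0 T ×ˢ univ) :=
    hh.continuousOn.comp (f := fun p : ℝ × ℝ × ℝ => (p.1, p.2.1 + p.2.2))
      (by fun_prop) fun p hp => ⟨hp.1, mem_univ _⟩
  exact ((hright.sub (by fun_prop)).sub (hleft.sub (by fun_prop))).sub (by fun_prop)

theorem exists_forall_penalizedIncrement_le (hh : IsPeriodicSolution G c T h) (hc : 0 < c)
    (hT : 0 ≤ T) (hM : 0 ≤ M) :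
    ∃ t ∈ Icc 0 T, ∃ x y, x ≤ y ∧ ∀ t' ∈ Icc 0 T, ∀ x' y', x' ≤ y' →
      penalizedIncrement h M ε t' x' y' ≤ penalizedIncrement h M ε t x y := by
  have hcompact : IsCompact (Icc 0 T ×ˢ Icc 0 c ×ˢ Icc 0 c) :=
    isCompact_Icc.prod (isCompact_Icc.prod isCompact_Icc)
  obtain ⟨⟨t, x, d⟩, ⟨ht, -, hd⟩, hmax⟩ := hcompact.exists_isMaxOn
    ⟨(0, 0, 0), ⟨le_rfl, hT⟩, ⟨le_rfl, hc.le⟩, ⟨le_rfl, hc.le⟩⟩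
    ((hh.continuousOn_penalizedIncrement (M := M) (ε := ε)).mono (prod_mono_right (subset_univ _)))
  refine ⟨t, ht, x, x + d, le_add_of_nonneg_right hd.1, fun t' ht' x' y' hxy' => ?_⟩
  obtain ⟨x₀, hx₀, d₀, hd₀, hd₀_le, hx₀_eq, hy₀_eq⟩ :=
    exists_mem_Icc_pair_of_periodic (hh.periodic t' ht') hc hxy'
  calc penalizedIncrement h M ε t' x' y'
      ≤ penalizedIncrement h M ε t' x₀ (x₀ + d₀) := by
        unfold penalizedIncrement
        rw [hx₀_eq, hy₀_eq]
        linarith [mul_le_mul_of_nonneg_left hd₀_le hM]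
    _ ≤ penalizedIncrement h M ε t x (x + d) :=
        isMaxOn_iff.1 hmax (t', x₀, d₀) ⟨ht', hx₀, hd₀⟩

theorem penalty_nonpos_of_forall_penalizedIncrement_le (hh : IsPeriodicSolution G c T h)
    (hG : Monotone (G M)) {t x y : ℝ} (ht : t ∈ Ioc 0 T) (hxy : x < y)
    (hmax : ∀ t' ∈ Icc 0 T, ∀ x' y', x' ≤ y' →
      penalizedIncrement h M ε t' x' y' ≤ penalizedIncrement h M ε t x y) : ε ≤ 0 := by
  have ht' : t ∈ Icc 0 T := Ioc_subset_Icc_self ht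
  have hmax_right : IsLocalMax (fun z => h t z - M * z) y := by
    filter_upwards [lt_mem_nhds hxy] with z hz
    have hle := hmax t ht' x z hz.le
    unfold penalizedIncrement at hle
    linarith
  have hmin_left : IsLocalMin (fun z => h t z - M * z) x := by
    filter_upwards [gt_mem_nhds hxy] with z hz
    have hle := hmax t ht' z y hz.le
    unfold penalizedIncrement at hle
    linarith
  obtain ⟨hslope_right, hcurv_right⟩ :=
    deriv_eq_and_deriv_deriv_nonpos_of_isLocalMax_sub_mul (hh.differentiable t ht') hmax_right
  obtain ⟨hslope_left, hcurv_left⟩ :=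
    deriv_eq_and_deriv_deriv_nonneg_of_isLocalMin_sub_mul (hh.differentiable t ht') hmin_left
  have hright := hh.hasDerivWithinAt y t ht'
  have hleft := hh.hasDerivWithinAt x t ht'
  rw [hslope_right] at hright
  rw [hslope_left] at hleft
  have hderiv : HasDerivWithinAt (fun s => penalizedIncrement h M ε s x y)
      (G M (deriv (deriv (h t)) y) - G M (deriv (deriv (h t)) x) - ε) (Icc 0 T) t := by
    simpa [penalizedIncrement] using ((hright.sub_const (M * y)).fun_sub
      (hleft.sub_const (M * x))).fun_sub ((hasDerivWithinAt_id t _).const_mul ε)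
  have hnonneg := deriv_nonneg_of_isMaxOn_Icc ht.1 ht.2 hderiv
    fun s hs => hmax s hs x y hxy.le
  linarith [hG (hcurv_right.trans hcurv_left)]

theorem penalizedIncrement_nonpos (hh : IsPeriodicSolution G c T h) (hc : 0 < c) (hM : 0 ≤ M)
    (hG : Monotone (G M)) (hinit : ∀ x, deriv (h 0) x ≤ M) (hε : 0 < ε)
    {t x y : ℝ} (ht : t ∈ Icc 0 T) (hxy : x ≤ y) : penalizedIncrement h M ε t x y ≤ 0 := by
  have hT : 0 ≤ T := ht.1.trans ht.2
  obtain ⟨t₀, ht₀, x₀, y₀, hxy₀, hmax⟩ :=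
    hh.exists_forall_penalizedIncrement_le (ε := ε) hc hT hM
  refine (hmax t ht x y hxy).trans ?_
  rcases hxy₀.eq_or_lt with rfl | hlt
  · simpa [penalizedIncrement] using mul_nonneg hε.le ht₀.1
  rcases ht₀.1.eq_or_lt with rfl | hpos
  · simpa [penalizedIncrement] using
      (antitone_sub_mul_iff_deriv_le (hh.differentiable 0 ht₀)).2 hinit hxy₀
  · exact absurd hε
      (hh.penalty_nonpos_of_forall_penalizedIncrement_le hG ⟨hpos, ht₀.2⟩ hlt hmax).not_gt

theorem deriv_le (hh : IsPeriodicSolution G c T h) (hc : 0 < c) (hM : 0 ≤ M)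
    (hG : Monotone (G M)) (hinit : ∀ x, deriv (h 0) x ≤ M) {t : ℝ} (ht : t ∈ Icc 0 T) (x : ℝ) :
    deriv (h t) x ≤ M := by
  refine (antitone_sub_mul_iff_deriv_le (hh.differentiable t ht)).1 (fun x y hxy => ?_) x
  by_contra! hlt
  obtain ⟨ε, hε, hεt⟩ := exists_pos_mul_lt (sub_pos.2 hlt) t
  have hnonpos := hh.penalizedIncrement_nonpos hc hM hG hinit hε ht hxy
  unfold penalizedIncrement at hnonpos
  linarith

theorem abs_deriv_le (hh : IsPeriodicSolution G c T h) (hc : 0 < c) (hM : 0 ≤ M)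
    (hG : Monotone (G M)) (hG_neg : Monotone (G (-M))) (hinit : ∀ x, |deriv (h 0) x| ≤ M)
    {t : ℝ} (ht : t ∈ Icc 0 T) (x : ℝ) : |deriv (h t) x| ≤ M := by
  have hupper := hh.deriv_le hc hM hG (fun y => (abs_le.1 (hinit y)).2) ht x
  have hlower := hh.neg.deriv_le hc hM (fun p q hpq => neg_le_neg (hG_neg (neg_le_neg hpq)))
    (fun y => by simpa [deriv.neg'] using neg_le.1 (abs_le.1 (hinit y)).1) ht x
  rw [Pi.neg_apply, deriv.neg] at hlower
  exact abs_le.2 ⟨neg_le.1 hlower, hupper⟩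

theorem bddAbove_range_abs_deriv (hh : IsPeriodicSolution G c T h) (hc : 0 < c) {t : ℝ}
    (ht : t ∈ Icc 0 T) : BddAbove (range fun x => |deriv (h t) x|) :=
  (((periodic_deriv (hh.periodic t ht)).comp abs).compact_of_continuous hc.ne'
    (hh.differentiable_deriv t ht).continuous.abs).bddAbove

end IsPeriodicSolution

theorem stmt1_general {G : ℝ → ℝ → ℝ} {a c T : ℝ} {h : ℝ → ℝ → ℝ}
    (hG : ∀ p, a ≤ |p| → Monotone (G p)) (hc : 0 < c) (hh : IsPeriodicSolution G c T h) :
    ∀ t ∈ Icc 0 T, ∀ x : ℝ, |deriv (h t) x| ≤ max (⨆ y : ℝ, |deriv (h 0) y|) a := by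
  intro t ht x
  set M := max (⨆ y : ℝ, |deriv (h 0) y|) a
  have hM : 0 ≤ M := le_max_of_le_left (Real.iSup_nonneg fun y => abs_nonneg _)
  have haM : a ≤ |M| := (le_max_right _ _).trans (le_abs_self M)
  have hbdd := hh.bddAbove_range_abs_deriv hc ⟨le_rfl, ht.1.trans ht.2⟩
  exact hh.abs_deriv_le hc hM (hG M haM) (hG (-M) (by rwa [abs_neg]))
    (fun y => (le_ciSup hbdd y).trans (le_max_left _ _)) ht x

theorem monotone_slopeSelection {p : ℝ} (hp : 1 / √3 ≤ |p|) :
    Monotone fun q : ℝ => (3 * p ^ 2 - 1) * q := by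
  have hsq : 1 / 3 ≤ p ^ 2 := by
    simpa using pow_le_pow_left₀ (by positivity) hp 2
  exact monotone_mul_left_of_nonneg (by linarith)

/-- 1D maximum principle, Proposition 1.1, Eq. (1.7):
if `h ∈ C_t^1 C_x^2([0,T] × 𝕋)` is a classical solution of `∂_t h = ∂_x((∂_x h)³ − ∂_x h)`,
then for every `t ∈ [0,T]`, `‖∂_x h(t,·)‖_∞ ≤ max{‖∂_x h(0,·)‖_∞, 1/√3}`. -/
theorem stmt1 (T : ℝ) (hT : 0 < T) (h : ℝ → ℝ → ℝ)
    (hper : ∀ t ∈ Icc 0 T, Function.Periodic (h t) (2 * Real.pi))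
    (hregx : ∀ t ∈ Icc 0 T, ContDiff ℝ 2 (h t))
    (hcont : ContinuousOn (fun p : ℝ × ℝ => h p.1 p.2) (Icc 0 T ×ˢ univ))
    (hpde : ∀ (x : ℝ), ∀ t ∈ Icc 0 T,
      HasDerivWithinAt (fun s => h s x)
        (deriv (fun y => (deriv (h t) y) ^ 3 - deriv (h t) y) x) (Icc 0 T) t) :
    ∀ t ∈ Icc 0 T, ∀ x : ℝ,
      |deriv (h t) x| ≤ max (⨆ y : ℝ, |deriv (h 0) y|) (1 / Real.sqrt 3) := by
  refine stmt1_general (fun _ => monotone_slopeSelection) two_pi_pos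
    ⟨hper, fun t ht => (hregx t ht).differentiable two_ne_zero,
      fun t ht => (hregx t ht).differentiable_deriv_two, hcont, fun x t ht => ?_⟩
  rw [← deriv_cube_sub_self ((hregx t ht).differentiable_deriv_two x)]
  exact hpde x t ht
end
end
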